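/- Theorem 1: For the quaternary sequence u₃ = φ[s₂, s₄] of period p, the 4-adic complexity satisfies Φ₄(u₃) ≥ ⌊log₄((4^p − 1)/(3(1+2p)) + 1)⌋. -/

import Mathlib

open Finset

/-- The cyclotomic class `D_i` of order 4 modulo `p` with respect to the
primitive root `θ`: `{θ^(i+4j) mod p : 0 ≤ j < (p-1)/4}`. -/
def cycD (p θ i : ℕ) : Finset ℕ :=
  (Finset.range ((p - 1) / 4)).image fun j => θ ^ (i + 4 * j) % p

/-- The binary sequence `s₁` with support set `D₀ ∪ D₁`. -/
def seqS1 (p θ : ℕ) (t : ℕ) : ℕ := if t ∈ cycD p θ 0 ∪ cycD p θ 1 then 1 else 0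

/-- The binary sequence `s₂` with support set `D₀ ∪ D₃`. -/
def seqS2 (p θ : ℕ) (t : ℕ) : ℕ := if t ∈ cycD p θ 0 ∪ cycD p θ 3 then 1 else 0

/-- The binary sequence `s₃` with support set `D₁ ∪ D₂`. -/
def seqS3 (p θ : ℕ) (t : ℕ) : ℕ := if t ∈ cycD p θ 1 ∪ cycD p θ 2 then 1 else 0

/-- The binary sequence `s₄` with support set `D₂ ∪ D₃`. -/
def seqS4 (p θ : ℕ) (t : ℕ) : ℕ := if t ∈ cycD p θ 2 ∪ cycD p θ 3 then 1 else 0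

/-- The bitwise complement `s + 1` of a binary sequence. -/
def seqCompl (s : ℕ → ℕ) (t : ℕ) : ℕ := 1 - s t

/-- The inverse Gray mapping: `φ[0,0]=0, φ[0,1]=1, φ[1,1]=2, φ[1,0]=3`. -/
def gray (a b : ℕ) : ℕ := if a = 0 then b else 3 - b

/-- The quaternary sequence `φ[r,s] : t ↦ φ[r(t), s(t)]`. -/
def graySeq (r s : ℕ → ℕ) (t : ℕ) : ℕ := gray (r t) (s t)

/-- The generating value `U(4) = Σ_{t=0}^{p-1} u(t)·4^t` of a quaternary
sequence `u` of period `p`. -/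
def seqVal (p : ℕ) (u : ℕ → ℕ) : ℕ := ∑ t ∈ Finset.range p, u t * 4 ^ t

/-- The 4-adic complexity `Φ₄(u) = ⌊log₄((4^p − 1)/gcd(4^p − 1, U(4)) + 1)⌋`
of a quaternary sequence `u` of period `p`. -/
noncomputable def adicComplexity4 (p : ℕ) (u : ℕ → ℕ) : ℤ :=
  ⌊Real.logb 4 (((4 ^ p - 1 : ℕ) : ℝ) / ((Nat.gcd (4 ^ p - 1) (seqVal p u) : ℕ) : ℝ) + 1)⌋

/-
Let `χ` be the quartic character with `χ θ = I`, let `G` and `H` be the values at `4` of the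
generating polynomials of `χ ^ 2` and `Re χ - Im χ`, and put `Φ = (4 ^ p - 1) / 3`. Off `t = 0` we
have `2 u₃ = χ ^ 2 + 2 (Re χ - Im χ) + 3`, so `2 U(4) ≡ G + 2 H - 3` modulo `Φ`. Evaluating the same
polynomials at a complex `p`-th root of unity `ζ` gives Gauss sums; as `Φ` is the value at `4` of
the minimal polynomial of `ζ`, their product formulas become `G ^ 2 ≡ p` and
`H ^ 2 ≡ -p - 2 y G` modulo `Φ`, where the Jacobi sum `J(χ, χ) = x + 2 y I` has norm
`p = x ^ 2 + 4 y ^ 2`. Eliminating `G` and `H`, every common divisor `d` of `Φ` and `U(4)` divides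
`(5 p + 9) ^ 2 - 4 p (4 y - 3) ^ 2`.

All prime factors of `Φ` are `1` modulo `2 p`, so `d = 2 p k + 1`. The primes `p = 5` and
`p = 13` are checked by hand; for `p ≥ 17` the size of the dividend and its residues modulo `p` and
`16` leave `k ≤ 4`. For `k = 2` the number `4 p + 1` would be a prime
`≡ 5 [MOD 8]` modulo which `2` is a square. For `k = 3` and `k = 4`, `d` would be divisible by `7`
and `3` respectively, neither of which is `1` modulo `2 p`. Hence `d ≤ 2 p + 1`.
-/

section DivisorsOfFourPowSubOne

theorem modEq_one_of_pow_eq_one {p r : ℕ} [Fact p.Prime] [Fact r.Prime] {a : ZMod r}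
    (h : a ^ p = 1) (ha : a ≠ 1) : r ≡ 1 [MOD p] := by
  have ha0 : a ≠ 0 := by
    rintro rfl
    simp [(Fact.out : p.Prime).ne_zero] at h
  have hdvd : p ∣ r - 1 := orderOf_eq_prime h ha ▸ ZMod.orderOf_dvd_card_sub_one ha0
  exact ((Nat.modEq_iff_dvd' (Fact.out : r.Prime).one_le).2 hdvd).symm

theorem modEq_one_of_forall_prime_dvd {n d : ℕ} (hd : d ≠ 0)
    (h : ∀ r, r.Prime → r ∣ d → r ≡ 1 [MOD n]) : d ≡ 1 [MOD n] := by
  induction d using induction_on_primes with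
  | zero => exact absurd rfl hd
  | one => rfl
  | prime_mul q d hq ih =>
    have hd' := ih (right_ne_zero_of_mul hd) fun r hr hrd => h r hr (hrd.mul_left q)
    simpa using (h q hq (dvd_mul_right q d)).mul hd'

theorem dvd_pow_sub_one_iff {a n r : ℕ} (ha : 0 < a) : r ∣ a ^ n - 1 ↔ (a : ZMod r) ^ n = 1 := by
  rw [← ZMod.natCast_eq_zero_iff, Nat.cast_sub (Nat.one_le_pow _ _ ha), sub_eq_zero]
  push_cast
  rfl

theorem four_pow_sub_one (n : ℕ) : 4 ^ n - 1 = 3 * ∑ t ∈ range n, 4 ^ t := by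
  have h : (∑ t ∈ range n, 4 ^ t) * 3 + 1 = 4 ^ n := geom_sum_mul_add 3 n
  omega

theorem three_dvd_geom_sum_four_iff {n : ℕ} : 3 ∣ ∑ t ∈ range n, 4 ^ t ↔ 3 ∣ n := by
  rw [Nat.dvd_iff_mod_eq_zero, Nat.dvd_iff_mod_eq_zero, sum_nat_mod]
  simp [Nat.pow_mod]

theorem odd_of_dvd_four_pow_sub_one {n d : ℕ} (hn : n ≠ 0) (hd : d ∣ 4 ^ n - 1) : Odd d := by
  have hodd : Odd (4 ^ n - 1) :=
    Nat.Even.sub_odd (Nat.one_le_pow _ _ (by norm_num)) ((by decide : Even 4).pow_of_ne_zero hn)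
      odd_one
  exact hodd.of_dvd_nat hd

theorem modEq_one_of_dvd_four_pow_sub_one {p d : ℕ} (hp : p.Prime) (hp2 : Odd p)
    (hd : d ∣ 4 ^ p - 1) (h3 : ¬ 3 ∣ d) : d ≡ 1 [MOD 2 * p] := by
  refine modEq_one_of_forall_prime_dvd (by rintro rfl; simp at h3) fun r hr hrd => ?_
  have := Fact.mk hp
  have := Fact.mk hr
  have hr4 : (4 : ZMod r) ≠ 1 := by
    intro h
    have h30 : ((3 : ℕ) : ZMod r) = 0 := by push_cast; linear_combination h
    rw [ZMod.natCast_eq_zero_iff, Nat.prime_dvd_prime_iff_eq hr Nat.prime_three] at h30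
    exact h3 (h30 ▸ hrd)
  have hrp : r ≡ 1 [MOD p] :=
    modEq_one_of_pow_eq_one (by exact_mod_cast (dvd_pow_sub_one_iff four_pos).1 (hrd.trans hd)) hr4
  have hr2 : r ≡ 1 [MOD 2] := Nat.odd_iff.1 (odd_of_dvd_four_pow_sub_one hp.ne_zero (hrd.trans hd))
  exact (Nat.modEq_and_modEq_iff_modEq_mul (Nat.coprime_two_left.2 hp2)).1 ⟨hr2, hrp⟩

theorem prime_of_dvd_four_pow_sub_one {p d : ℕ} (hp : p.Prime) (hp2 : Odd p) (hd1 : 1 < d)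
    (hd : d ∣ 4 ^ p - 1) (h3 : ¬ 3 ∣ d) (hlt : d < (2 * p + 1) ^ 2) : d.Prime := by
  by_contra hnp
  have hmod : d.minFac ≡ 1 [MOD 2 * p] := modEq_one_of_dvd_four_pow_sub_one hp hp2
    (d.minFac_dvd.trans hd) fun h => h3 (h.trans d.minFac_dvd)
  have hmin : 1 < d.minFac := (Nat.minFac_prime hd1.ne').one_lt
  have hle : 2 * p ≤ d.minFac - 1 :=
    Nat.le_of_dvd (by omega) ((Nat.modEq_iff_dvd' hmin.le).1 hmod.symm)
  have hsq : (2 * p + 1) ^ 2 ≤ d.minFac ^ 2 := Nat.pow_le_pow_left (by omega) 2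
  exact absurd (hsq.trans (Nat.minFac_sq_le_self (by omega) hnp)) (by omega)

theorem not_four_mul_add_one_dvd_four_pow_sub_one {p : ℕ} (hp2 : Odd p)
    (hprime : (4 * p + 1).Prime) : ¬ 4 * p + 1 ∣ 4 ^ p - 1 := by
  intro hd
  have := Fact.mk hprime
  have hmod : (4 * p + 1) % 8 = 5 := by obtain ⟨m, rfl⟩ := hp2; omega
  have hpow : (2 : ZMod (4 * p + 1)) ^ ((4 * p + 1) / 2) = 1 := by
    rw [show (4 * p + 1) / 2 = 2 * p by omega, pow_mul, ← (dvd_pow_sub_one_iff four_pos).1 hd]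
    norm_num
  have h2 : (2 : ZMod (4 * p + 1)) ≠ 0 := by
    intro h
    rw [h, zero_pow (by omega)] at hpow
    exact zero_ne_one hpow
  have hsq := (ZMod.euler_criterion _ h2).2 hpow
  rw [ZMod.exists_sq_eq_two_iff (by omega)] at hsq
  omega

end DivisorsOfFourPowSubOne

section DivisorBound

theorem sq_sub_eq_sum_of_eq_sq_add {p x y : ℤ} (hxy : p = x ^ 2 + 4 * y ^ 2) :
    (5 * p + 9) ^ 2 - 4 * p * (4 * y - 3) ^ 2 =
      (p - 9) ^ 2 + 8 * p * (3 * x ^ 2 + (2 * y + 3) ^ 2) := by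
  linear_combination (24 * p) * hxy

theorem sixteen_dvd_sq_sub {p : ℤ} (hp8 : p % 8 = 5) (y : ℤ) :
    16 ∣ (5 * p + 9) ^ 2 - 4 * p * (4 * y - 3) ^ 2 := by
  obtain ⟨q, rfl⟩ : ∃ q, p = 8 * q + 5 := ⟨p / 8, by omega⟩
  exact ⟨100 * q ^ 2 + 168 * q + 71 - (8 * q + 5) * (4 * y ^ 2 - 6 * y + 2), by ring⟩

/- Write the dividend as `16 (2pk + 1) e`. Modulo `p` this forces `16 e = 81 + p j`; the sizes of
both sides confine `j` to `-4, …, 6`, and `p ≡ 5 [MOD 8]` leaves only `j = 3`. -/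
theorem four_mul_sq_eq_of_dvd {p k z : ℤ} (hp8 : p % 8 = 5) (hp : 17 ≤ p) (hk : 2 ≤ k)
    (hpos : 0 ≤ (5 * p + 9) ^ 2 - 4 * p * z ^ 2)
    (hdvd : 16 * (2 * p * k + 1) ∣ (5 * p + 9) ^ 2 - 4 * p * z ^ 2) :
    4 * z ^ 2 = 25 * p + 87 - 162 * k - 6 * k * p := by
  obtain ⟨e, he⟩ := hdvd
  have he0 : 0 ≤ e := by
    by_contra! h
    have : 16 * (2 * p * k + 1) * e < 0 := mul_neg_of_pos_of_neg (by positivity) h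
    omega
  obtain ⟨j, hj⟩ : p ∣ 16 * e - 81 :=
    ⟨90 + 25 * p - 4 * z ^ 2 - 32 * k * e, by linear_combination -he⟩
  have hmain : j + 162 * k + 2 * k * j * p = 90 + 25 * p - 4 * z ^ 2 := by
    apply mul_left_cancel₀ (by omega : p ≠ 0)
    linear_combination -he - (1 + 2 * p * k) * hj
  have hj_le : j ≤ 6 := by
    by_contra! h
    have hkj : 2 * 7 ≤ k * j := by nlinarith
    have hkjp : 2 * 7 * p ≤ k * j * p := by nlinarith
    nlinarith [sq_nonneg z]
  have hj_gt : -5 < j := by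
    by_contra! h
    have : p * j ≤ p * (-5) := mul_le_mul_of_nonneg_left h (by omega)
    omega
  obtain rfl : j = 3 := by interval_cases j <;> omega
  linear_combination hmain

theorem le_four_of_four_mul_sq_eq {p k z : ℤ} (hp : 0 ≤ p)
    (h : 4 * z ^ 2 = 25 * p + 87 - 162 * k - 6 * k * p) : k ≤ 4 := by
  by_contra! hk
  nlinarith [sq_nonneg z, mul_le_mul_of_nonneg_right hk hp]

theorem seven_dvd_of_four_mul_sq_eq {p z : ℤ} (h : 4 * z ^ 2 = 7 * p - 399) : 7 ∣ 6 * p + 1 := by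
  obtain ⟨w, rfl⟩ : 7 ∣ z := Int.Prime.dvd_pow' (by norm_num : Nat.Prime 7) (by omega : 7 ∣ z ^ 2)
  have hp : p = 28 * w ^ 2 + 57 := by linarith
  omega

theorem three_dvd_of_four_mul_sq_eq {p z : ℤ} (hp : ¬ 3 ∣ p) (h : 4 * z ^ 2 = p - 561) :
    3 ∣ 8 * p + 1 := by
  have hz : ¬ 3 ∣ z ^ 2 := by omega
  have : z ^ 2 % 3 = 0 ∨ z ^ 2 % 3 = 1 := by
    rcases (by omega : z % 3 = 0 ∨ z % 3 = 1 ∨ z % 3 = 2) with h | h | h <;>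
      simp [pow_two, Int.mul_emod, h]
  omega

theorem le_two_mul_add_one_of_dvd_of_lt {p d : ℕ} {x y : ℤ} (hp8 : p % 8 = 5) (hlt : p < 17)
    (hxy : (p : ℤ) = x ^ 2 + 4 * y ^ 2) (hd : d ∣ 4 ^ p - 1)
    (hM : (d : ℤ) ∣ (5 * p + 9) ^ 2 - 4 * p * (4 * y - 3) ^ 2) : d ≤ 2 * p + 1 := by
  have hp16 : (p : ℤ) < 16 := by omega
  have hy_le : y ≤ 1 := by nlinarith [sq_nonneg x]
  have hy_ge : -1 ≤ y := by nlinarith [sq_nonneg x]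
  have hgcd := Int.dvd_coe_gcd hM (Int.natCast_dvd_natCast.2 hd)
  rcases (by omega : p = 5 ∨ p = 13) with rfl | rfl
  all_goals
    have hle := Int.le_of_dvd (by positivity) hgcd
    interval_cases y <;> norm_num at hle hxy <;> omega

theorem exists_four_mul_sq_eq_of_dvd {p d : ℕ} {x y : ℤ} (hp : p.Prime) (hp8 : p % 8 = 5)
    (hp17 : 17 ≤ p) (hxy : (p : ℤ) = x ^ 2 + 4 * y ^ 2) (hd : d ∣ 4 ^ p - 1) (h3 : ¬ 3 ∣ d)
    (hM : (d : ℤ) ∣ (5 * p + 9) ^ 2 - 4 * p * (4 * y - 3) ^ 2) (hlt : 2 * p + 1 < d) :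
    ∃ k : ℕ, 2 ≤ k ∧ k ≤ 4 ∧ d = 2 * p * k + 1 ∧
      4 * (4 * y - 3) ^ 2 = 25 * (p : ℤ) + 87 - 162 * k - 6 * k * p := by
  have hodd : Odd p := Nat.odd_iff.2 (by omega)
  obtain ⟨k, hk⟩ : 2 * p ∣ d - 1 := (Nat.modEq_iff_dvd' (by omega)).1
    (modEq_one_of_dvd_four_pow_sub_one hp hodd hd h3).symm
  obtain rfl : d = 2 * p * k + 1 := by omega
  have hk2 : 2 ≤ k := by
    by_contra! h
    interval_cases k <;> omega
  have hcop : IsCoprime (16 : ℤ) ((2 * p * k + 1 : ℕ) : ℤ) := by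
    have h2 : Nat.Coprime 2 (2 * p * k + 1) :=
      Nat.coprime_two_left.2 (odd_of_dvd_four_pow_sub_one hp.ne_zero hd)
    exact_mod_cast Nat.isCoprime_iff_coprime.2 (h2.pow_left 4)
  have hdvd := hcop.mul_dvd (sixteen_dvd_sq_sub (by omega) y) hM
  have hpos : 0 ≤ (5 * (p : ℤ) + 9) ^ 2 - 4 * p * (4 * y - 3) ^ 2 := by
    rw [sq_sub_eq_sum_of_eq_sq_add hxy]
    positivity
  have heq := four_mul_sq_eq_of_dvd (k := k) (by omega) (by omega) (by omega) hpos
    (by exact_mod_cast hdvd)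
  have hk4 : k ≤ 4 := by exact_mod_cast le_four_of_four_mul_sq_eq p.cast_nonneg heq
  exact ⟨k, hk2, hk4, rfl, heq⟩

theorem le_two_mul_add_one_of_dvd {p d : ℕ} {x y : ℤ} (hp : p.Prime) (hp8 : p % 8 = 5)
    (hxy : (p : ℤ) = x ^ 2 + 4 * y ^ 2) (hd : d ∣ 4 ^ p - 1) (h3 : ¬ 3 ∣ d)
    (hM : (d : ℤ) ∣ (5 * p + 9) ^ 2 - 4 * p * (4 * y - 3) ^ 2) : d ≤ 2 * p + 1 := by
  rcases lt_or_ge p 17 with hlt | hge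
  · exact le_two_mul_add_one_of_dvd_of_lt hp8 hlt hxy hd hM
  by_contra! hgt
  have hodd : Odd p := Nat.odd_iff.2 (by omega)
  obtain ⟨k, hk2, hk4, rfl, heq⟩ := exists_four_mul_sq_eq_of_dvd hp hp8 hge hxy hd h3 hM hgt
  interval_cases k
  · rw [show 2 * p * 2 + 1 = 4 * p + 1 by ring] at hd h3
    have hprime := prime_of_dvd_four_pow_sub_one hp hodd (by omega) hd h3 (by nlinarith)
    exact not_four_mul_add_one_dvd_four_pow_sub_one hodd hprime hd
  · have h7 := seven_dvd_of_four_mul_sq_eq (p := p) (z := 4 * y - 3) (by linear_combination heq)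
    have h7mod : 7 ≡ 1 [MOD 2 * p] := modEq_one_of_dvd_four_pow_sub_one hp hodd
      ((by omega : 7 ∣ 2 * p * 3 + 1).trans hd) (by norm_num)
    have hp6 : 2 * p ∣ 6 := (Nat.modEq_iff_dvd' (by norm_num)).1 h7mod.symm
    have hle := Nat.le_of_dvd (by norm_num) hp6
    omega
  · have hp3 : ¬ 3 ∣ p := fun h => by
      have := (Nat.prime_dvd_prime_iff_eq Nat.prime_three hp).1 h
      omega
    have h3d := three_dvd_of_four_mul_sq_eq (p := p) (z := 4 * y - 3) (by omega)
      (by linear_combination heq)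
    omega

end DivisorBound

section GaussianCharacters

theorem gaussianInt_eq_of_isUnit {z : GaussianInt} (hz : IsUnit z) :
    z = 1 ∨ z = -1 ∨ z = ⟨0, 1⟩ ∨ z = ⟨0, -1⟩ := by
  have hnorm : z.re * z.re + z.im * z.im = 1 := by
    simpa [Zsqrtd.norm_def] using (Zsqrtd.norm_eq_one_iff' (by norm_num) z).2 hz
  have hre : z.re ≤ 1 ∧ -1 ≤ z.re := by constructor <;> nlinarith [mul_self_nonneg z.im]
  have him : z.im ≤ 1 ∧ -1 ≤ z.im := by constructor <;> nlinarith [mul_self_nonneg z.re]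
  obtain ⟨a, b⟩ := z
  simp only at hnorm hre him
  obtain ⟨ha, ha'⟩ := hre
  obtain ⟨hb, hb'⟩ := him
  interval_cases a <;> interval_cases b <;> first | omega | decide

theorem gaussianInt_mul_add_mul_star (z : GaussianInt) :
    ⟨1, 1⟩ ^ 2 * z + ⟨1, -1⟩ ^ 2 * star z = -(4 * (z.im : GaussianInt)) := by
  ext <;>
    simp only [pow_two, Zsqrtd.re_add, Zsqrtd.im_add, Zsqrtd.re_mul, Zsqrtd.im_mul, Zsqrtd.re_neg,
      Zsqrtd.im_neg, Zsqrtd.re_star, Zsqrtd.im_star, Zsqrtd.re_ofNat, Zsqrtd.im_ofNat,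
      Zsqrtd.re_intCast, Zsqrtd.im_intCast, Nat.cast_ofNat] <;>
    ring

variable {R : Type*} [CommMonoid R]

theorem mulChar_inv_apply_eq_star (χ : MulChar R GaussianInt) (a : R) : χ⁻¹ a = star (χ a) := by
  by_cases ha : IsUnit a
  · have hstar : χ a * star (χ a) = 1 := by
      rw [← Zsqrtd.norm_eq_mul_conj, (Zsqrtd.norm_eq_one_iff' (by norm_num) _).2 (ha.map χ),
        Int.cast_one]
    rw [MulChar.inv_apply_eq_inv, ← mul_one (Ring.inverse _)]
    exact (Ring.inverse_mul_eq_iff_eq_mul _ _ _ (ha.map χ)).2 hstar.symm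
  · rw [MulChar.map_nonunit _ ha, MulChar.map_nonunit _ ha, star_zero]

theorem mulChar_gaussianInt_pow_four (χ : MulChar R GaussianInt) : χ ^ 4 = 1 := by
  refine MulChar.ext fun a => ?_
  rw [MulChar.pow_apply_coe, MulChar.one_apply_coe]
  rcases gaussianInt_eq_of_isUnit (a.isUnit.map χ) with h | h | h | h <;> rw [h] <;> decide

theorem mulChar_gaussianInt_inv_sq (χ : MulChar R GaussianInt) : χ⁻¹ ^ 2 = χ ^ 2 := by
  rw [inv_pow, inv_eq_iff_mul_eq_one, ← pow_add, mulChar_gaussianInt_pow_four]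

end GaussianCharacters

section QuarticGaussSums

variable {F : Type*} [Field F] [Fintype F]

theorem gaussSum_mul_gaussSum_inv {K : Type*} [CommRing K] [IsDomain K] {χ : MulChar F K}
    (hχ : χ ≠ 1) {ψ : AddChar F K} (hψ : ψ.IsPrimitive) :
    gaussSum χ ψ * gaussSum χ⁻¹ ψ = χ (-1) * Fintype.card F := by
  rw [← mul_gaussSum_inv_eq_gaussSum χ⁻¹, mul_left_comm, gaussSum_mul_gaussSum_eq_card hχ hψ,
    MulChar.inv_apply', inv_neg_one]

variable {χ : MulChar F GaussianInt}

theorem jacobiSum_inv_inv_eq_star (χ : MulChar F GaussianInt) :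
    jacobiSum χ⁻¹ χ⁻¹ = star (jacobiSum χ χ) := by
  simp only [jacobiSum, star_sum, star_mul', mulChar_inv_apply_eq_star]

theorem norm_jacobiSum_self (hχ : χ ^ 2 ≠ 1) : (jacobiSum χ χ).norm = Fintype.card F := by
  have hinj := GaussianInt.toComplex_injective
  have hχ2 : χ * χ ≠ 1 := by rwa [← pow_two]
  have hχ1 : χ ≠ 1 := by rintro rfl; simp at hχ
  have hchar : ringChar ℂ ≠ ringChar F := by
    rw [ringChar.eq_zero]
    exact (CharP.ringChar_ne_zero_of_finite F).symm
  have h := jacobiSum_mul_jacobiSum_inv hchar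
    ((MulChar.ringHomComp_ne_one_iff hinj).2 hχ1) ((MulChar.ringHomComp_ne_one_iff hinj).2 hχ1)
    (by rwa [← MulChar.ringHomComp_mul, MulChar.ringHomComp_ne_one_iff hinj])
  rw [MulChar.ringHomComp_inv, jacobiSum_ringHomComp, jacobiSum_ringHomComp,
    jacobiSum_inv_inv_eq_star, ← map_mul, ← Zsqrtd.norm_eq_mul_conj] at h
  exact_mod_cast hinj (h.trans (map_natCast _ _).symm)

theorem isPrimitiveRoot_gaussianInt_I : IsPrimitiveRoot (⟨0, 1⟩ : GaussianInt) 4 := by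
  rw [IsPrimitiveRoot.iff (by norm_num)]
  refine ⟨by decide, fun l h0 h4 => ?_⟩
  interval_cases l <;> decide

theorem four_dvd_card_sub_one (hχ : χ ^ 2 ≠ 1) : 4 ∣ Fintype.card F - 1 := by
  have horder : orderOf χ = 2 ^ (1 + 1) :=
    orderOf_eq_prime_pow (by simpa using hχ) (mulChar_gaussianInt_pow_four χ)
  have := χ.orderOf_dvd_card_sub_one
  rwa [horder] at this

theorem two_dvd_im_jacobiSum (hχ : χ ^ 2 ≠ 1) : 2 ∣ (jacobiSum χ χ).im := by
  have hχ4 := mulChar_gaussianInt_pow_four χ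
  obtain ⟨z, -, hz⟩ := exists_jacobiSum_eq_neg_one_add (by norm_num) hχ4 hχ4
    (four_dvd_card_sub_one hχ) isPrimitiveRoot_gaussianInt_I
  have hsq : ((⟨0, 1⟩ : GaussianInt) - 1) ^ 2 = ⟨0, -2⟩ := by decide
  simp [hz, hsq]

theorem exists_card_eq_sq_add_four_mul_sq (hχ : χ ^ 2 ≠ 1) :
    ∃ x y : ℤ, (Fintype.card F : ℤ) = x ^ 2 + 4 * y ^ 2 ∧ (jacobiSum χ χ).im = 2 * y := by
  obtain ⟨y, hy⟩ := two_dvd_im_jacobiSum hχ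
  have hnorm := norm_jacobiSum_self hχ
  rw [Zsqrtd.norm_def, hy] at hnorm
  exact ⟨(jacobiSum χ χ).re, y, by linear_combination -hnorm, hy⟩

variable {K : Type*} [CommRing K]

theorem sum_re_sq_mul (χ : MulChar F GaussianInt) (f : GaussianInt →+* K) (ψ : AddChar F K) :
    ∑ a, (((χ a ^ 2).re : ℤ) : K) * ψ a = gaussSum (χ.ringHomComp f ^ 2) ψ := by
  refine sum_congr rfl fun a _ => ?_
  have hre : (((χ a ^ 2).re : ℤ) : GaussianInt) = χ a ^ 2 := by
    rcases eq_or_ne a 0 with rfl | ha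
    · simp [MulChar.map_zero]
    · rcases gaussianInt_eq_of_isUnit (ha.isUnit.map χ) with h | h | h | h <;> rw [h] <;> decide
  rw [MulChar.pow_apply' _ two_ne_zero, MulChar.ringHomComp_apply, ← map_pow f]
  conv_rhs => rw [← hre, map_intCast]

theorem two_mul_sum_re_sub_im_mul (χ : MulChar F GaussianInt) (f : GaussianInt →+* K)
    (ψ : AddChar F K) :
    2 * ∑ a, (((χ a).re - (χ a).im : ℤ) : K) * ψ a =
      f ⟨1, 1⟩ * gaussSum (χ.ringHomComp f) ψ + f ⟨1, -1⟩ * gaussSum (χ.ringHomComp f)⁻¹ ψ := by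
  simp only [gaussSum, mul_sum, ← sum_add_distrib]
  refine sum_congr rfl fun a _ => ?_
  have h : (2 * ((χ a).re - (χ a).im : ℤ) : GaussianInt) =
      ⟨1, 1⟩ * χ a + ⟨1, -1⟩ * star (χ a) := by
    ext <;>
      simp only [Zsqrtd.re_add, Zsqrtd.im_add, Zsqrtd.re_mul, Zsqrtd.im_mul, Zsqrtd.re_star,
        Zsqrtd.im_star, Zsqrtd.re_ofNat, Zsqrtd.im_ofNat, Zsqrtd.re_intCast, Zsqrtd.im_intCast,
        Nat.cast_ofNat] <;>
      ring
  have hf := congrArg f h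
  simp only [map_mul, map_add, map_intCast, map_ofNat] at hf
  rw [MulChar.ringHomComp_inv, MulChar.ringHomComp_apply, MulChar.ringHomComp_apply,
    mulChar_inv_apply_eq_star]
  linear_combination ψ a * hf

variable [IsDomain K] {f : GaussianInt →+* K} {ψ : AddChar F K}

theorem sum_re_sq_mul_sq (hf : Function.Injective f) (hχ : χ ^ 2 ≠ 1) (hψ : ψ.IsPrimitive) :
    (∑ a, (((χ a ^ 2).re : ℤ) : K) * ψ a) ^ 2 = Fintype.card F := by
  have hχ2 : χ.ringHomComp f ^ 2 ≠ 1 := by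
    rwa [MulChar.ringHomComp_pow, MulChar.ringHomComp_ne_one_iff hf]
  have hinv : (χ.ringHomComp f ^ 2)⁻¹ = χ.ringHomComp f ^ 2 := by
    rw [MulChar.ringHomComp_pow, MulChar.ringHomComp_inv, ← inv_pow, mulChar_gaussianInt_inv_sq]
  have h := gaussSum_mul_gaussSum_inv hχ2 hψ
  rw [hinv, MulChar.pow_apply' _ two_ne_zero, ← map_pow, neg_one_sq, map_one, one_mul] at h
  rw [sum_re_sq_mul, pow_two, h]

theorem gaussSum_sq_mul_map_jacobiSum (hf : Function.Injective f) (hχ : χ ^ 2 ≠ 1) :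
    gaussSum (χ.ringHomComp f ^ 2) ψ * f (jacobiSum χ χ) = gaussSum (χ.ringHomComp f) ψ ^ 2 := by
  have hη2 : χ.ringHomComp f * χ.ringHomComp f ≠ 1 := by
    rwa [← pow_two, MulChar.ringHomComp_pow, MulChar.ringHomComp_ne_one_iff hf]
  rw [pow_two, pow_two, ← jacobiSum_mul_nontrivial hη2, jacobiSum_ringHomComp]

theorem sum_re_sub_im_mul_sq (hf : Function.Injective f) (hχ : χ ^ 2 ≠ 1) (hχ1 : χ (-1) = -1)
    (hψ : ψ.IsPrimitive) :
    (∑ a, (((χ a).re - (χ a).im : ℤ) : K) * ψ a) ^ 2 =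
      -(Fintype.card F + (jacobiSum χ χ).im * ∑ a, (((χ a ^ 2).re : ℤ) : K) * ψ a) := by
  set η := χ.ringHomComp f
  have hη : η ≠ 1 := (MulChar.ringHomComp_ne_one_iff hf).2 (by rintro rfl; simp at hχ)
  have hprod : gaussSum η ψ * gaussSum η⁻¹ ψ = -Fintype.card F := by
    rw [gaussSum_mul_gaussSum_inv hη hψ, MulChar.ringHomComp_apply, hχ1, map_neg, map_one,
      neg_one_mul]
  have hinv : χ⁻¹ ^ 2 = χ ^ 2 := mulChar_gaussianInt_inv_sq χ
  have hsq : gaussSum (η ^ 2) ψ * f (jacobiSum χ χ) = gaussSum η ψ ^ 2 :=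
    gaussSum_sq_mul_map_jacobiSum hf hχ
  have hsq_inv : gaussSum (η ^ 2) ψ * f (star (jacobiSum χ χ)) = gaussSum η⁻¹ ψ ^ 2 := by
    have h := gaussSum_sq_mul_map_jacobiSum (ψ := ψ) hf (hinv ▸ hχ)
    rwa [MulChar.ringHomComp_pow, hinv, jacobiSum_inv_inv_eq_star, ← MulChar.ringHomComp_pow,
      ← MulChar.ringHomComp_inv] at h
  have him := congrArg f (gaussianInt_mul_add_mul_star (jacobiSum χ χ))
  simp only [map_add, map_mul, map_pow, map_neg, map_intCast, map_ofNat] at him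
  have hmul : f ⟨1, 1⟩ * f ⟨1, -1⟩ = 2 := by
    rw [← map_mul, show (⟨1, 1⟩ * ⟨1, -1⟩ : GaussianInt) = 2 by decide, map_ofNat]
  have h4 : (4 : K) ≠ 0 := by
    rw [← map_ofNat f, map_ne_zero_iff f hf]
    decide
  rw [sum_re_sq_mul χ f]
  apply mul_left_cancel₀ h4
  linear_combination (2 * ∑ a, (((χ a).re - (χ a).im : ℤ) : K) * ψ a +
      f ⟨1, 1⟩ * gaussSum η ψ + f ⟨1, -1⟩ * gaussSum η⁻¹ ψ) * two_mul_sum_re_sub_im_mul χ f ψ +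
    gaussSum (η ^ 2) ψ * him - f ⟨1, 1⟩ ^ 2 * hsq - f ⟨1, -1⟩ ^ 2 * hsq_inv +
    2 * f ⟨1, 1⟩ * f ⟨1, -1⟩ * hprod - 2 * Fintype.card F * hmul

end QuarticGaussSums

section PeriodPolynomial

open Polynomial

/-- The integer polynomial whose value at an `n`-th root of unity is the exponential sum with
coefficients `c`, and whose value at `4` is the generating value of `c`. Its exponents are the
representatives in `[0, n)` of the residues. -/
noncomputable def periodPoly {n : ℕ} [NeZero n] (c : ZMod n → ℤ) : ℤ[X] :=
  ∑ a, C (c a) * X ^ a.val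

theorem eval_periodPoly {n : ℕ} [NeZero n] (c : ZMod n → ℤ) (m : ℤ) :
    (periodPoly c).eval m = ∑ a, c a * m ^ a.val := by
  simp [periodPoly, eval_finsetSum]

theorem aeval_periodPoly {n : ℕ} [NeZero n] {K : Type*} [CommRing K] {ζ : K} (hζ : ζ ^ n = 1)
    (c : ZMod n → ℤ) :
    aeval ζ (periodPoly c) = ∑ a, (c a : K) * AddChar.zmodChar n hζ a := by
  simp [periodPoly, AddChar.zmodChar_apply]

theorem geom_sum_dvd_eval_of_aeval_eq_zero {p : ℕ} [hp : Fact p.Prime] {K : Type*} [Field K]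
    [CharZero K] {ζ : K} (hζ : IsPrimitiveRoot ζ p) {P : ℤ[X]} (hP : aeval ζ P = 0) (m : ℤ) :
    ∑ t ∈ range p, m ^ t ∣ P.eval m := by
  have hdvd := minpoly.isIntegrallyClosed_dvd (hζ.isIntegral hp.out.pos) hP
  rw [← cyclotomic_eq_minpoly hζ hp.out.pos, cyclotomic_prime] at hdvd
  simpa [eval_geom_sum] using eval_dvd (x := m) hdvd

variable {p : ℕ} [Fact p.Prime]

/-- The generating polynomial of the quadratic character `χ ^ 2` attached to a quartic character
`χ`; at a root of unity it is the quadratic Gauss sum. The values of `χ ^ 2` are rational, so taking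
real parts only moves them to `ℤ`. -/
noncomputable def quadraticPoly (χ : MulChar (ZMod p) GaussianInt) : ℤ[X] :=
  periodPoly fun a => (χ a ^ 2).re

/-- The generating polynomial of `Re χ - Im χ`, which for a quartic character `χ` with `χ θ = I` is
`1` on `D₀ ∪ D₃` and `-1` on `D₁ ∪ D₂`. Together with `quadraticPoly χ` it determines the generating
value of `φ[s₂, s₄]`. -/
noncomputable def quarticPoly (χ : MulChar (ZMod p) GaussianInt) : ℤ[X] :=
  periodPoly fun a => (χ a).re - (χ a).im

variable {χ : MulChar (ZMod p) GaussianInt}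

theorem geom_sum_dvd_quadraticPoly_sq_sub (hχ : χ ^ 2 ≠ 1) (m : ℤ) :
    ∑ t ∈ range p, m ^ t ∣ (quadraticPoly χ).eval m ^ 2 - p := by
  have hζ := Complex.isPrimitiveRoot_exp p (NeZero.ne p)
  have hg := sum_re_sq_mul_sq GaussianInt.toComplex_injective hχ
    (AddChar.zmodChar_primitive_of_primitive_root p hζ)
  rw [← aeval_periodPoly hζ.pow_eq_one, ZMod.card] at hg
  have hdvd := geom_sum_dvd_eval_of_aeval_eq_zero hζ (P := quadraticPoly χ ^ 2 - (p : ℤ[X]))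
    (by simp [quadraticPoly, hg]) m
  rwa [eval_sub, eval_pow, eval_natCast] at hdvd

theorem geom_sum_dvd_quarticPoly_sq_add (hχ : χ ^ 2 ≠ 1) (hχ1 : χ (-1) = -1) (m : ℤ) :
    ∑ t ∈ range p, m ^ t ∣ (quarticPoly χ).eval m ^ 2 +
      (p + (jacobiSum χ χ).im * (quadraticPoly χ).eval m) := by
  have hζ := Complex.isPrimitiveRoot_exp p (NeZero.ne p)
  have hh := sum_re_sub_im_mul_sq GaussianInt.toComplex_injective hχ hχ1
    (AddChar.zmodChar_primitive_of_primitive_root p hζ)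
  rw [← aeval_periodPoly hζ.pow_eq_one, ← aeval_periodPoly hζ.pow_eq_one, ZMod.card] at hh
  have hdvd := geom_sum_dvd_eval_of_aeval_eq_zero hζ
    (P := quarticPoly χ ^ 2 + ((p : ℤ[X]) + C (jacobiSum χ χ).im * quadraticPoly χ))
    (by simp [quarticPoly, quadraticPoly, hh]) m
  rwa [eval_add, eval_add, eval_mul, eval_pow, eval_natCast, eval_C] at hdvd

end PeriodPolynomial

section CyclotomicClasses

variable {p θ : ℕ} [hp : Fact p.Prime]

theorem exists_mulChar_apply_eq_I (hp4 : p % 4 = 1) (hθ : IsPrimitiveRoot (θ : ZMod p) (p - 1)) :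
    ∃ χ : MulChar (ZMod p) GaussianInt, χ θ = ⟨0, 1⟩ := by
  have hp2 := hp.out.two_le
  have hθu : IsUnit (θ : ZMod p) := hθ.isUnit (by omega)
  have : NeZero (p - 1) := ⟨by omega⟩
  have hgen : ∀ u : (ZMod p)ˣ, u ∈ Subgroup.zpowers hθu.unit := fun u => by
    obtain ⟨i, -, hi⟩ := hθ.eq_pow_of_pow_eq_one (ZMod.pow_card_sub_one_eq_one u.ne_zero)
    exact ⟨i, Units.ext (by simpa using hi)⟩
  have hIu : IsUnit (⟨0, 1⟩ : GaussianInt) := isPrimitiveRoot_gaussianInt_I.isUnit (by norm_num)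
  have hI : hIu.unit ∈ rootsOfUnity (Fintype.card (ZMod p)ˣ) GaussianInt := by
    rw [mem_rootsOfUnity, ZMod.card_units]
    exact Units.ext (by
      simpa using (isPrimitiveRoot_gaussianInt_I.pow_eq_one_iff_dvd (p - 1)).2 (by omega))
  exact ⟨MulChar.ofRootOfUnity hI hgen, by simpa using MulChar.ofRootOfUnity_spec hI hgen⟩

theorem exists_eq_pow_add_four_mul (hp4 : p % 4 = 1) (hθ : IsPrimitiveRoot (θ : ZMod p) (p - 1))
    {a : ZMod p} (ha : a ≠ 0) :
    ∃ i < 4, ∃ j < (p - 1) / 4, a = (θ : ZMod p) ^ (i + 4 * j) := by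
  have : NeZero (p - 1) := ⟨by have := hp.out.two_le; omega⟩
  obtain ⟨m, hm, hma⟩ := hθ.eq_pow_of_pow_eq_one (ZMod.pow_card_sub_one_eq_one ha)
  exact ⟨m % 4, Nat.mod_lt _ (by norm_num), m / 4, by omega, by rw [Nat.mod_add_div, hma]⟩

variable {χ : MulChar (ZMod p) GaussianInt}

theorem apply_pow_add_four_mul (hχ : χ θ = ⟨0, 1⟩) (i j : ℕ) :
    χ ((θ : ZMod p) ^ (i + 4 * j)) = ⟨0, 1⟩ ^ i := by
  rw [map_pow, hχ, pow_add, pow_mul, isPrimitiveRoot_gaussianInt_I.pow_eq_one, one_pow, mul_one]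

theorem sq_ne_one_of_apply_eq_I (hχ : χ θ = ⟨0, 1⟩) : χ ^ 2 ≠ 1 := by
  intro h
  have hθu : IsUnit (θ : ZMod p) := by
    by_contra hθ
    rw [MulChar.map_nonunit χ hθ] at hχ
    exact absurd hχ (by decide)
  have hθ2 := DFunLike.congr_fun h (θ : ZMod p)
  rw [MulChar.pow_apply' _ two_ne_zero, hχ, MulChar.one_apply hθu] at hθ2
  exact absurd hθ2 (by decide)

theorem apply_neg_one_of_apply_eq_I (hp8 : p % 8 = 5)
    (hθ : IsPrimitiveRoot (θ : ZMod p) (p - 1)) (hχ : χ θ = ⟨0, 1⟩) : χ (-1) = -1 := by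
  have hpow : (θ : ZMod p) ^ (2 + 4 * (p / 8)) = -1 := by
    have h2 := hθ.pow (by omega) (show p - 1 = (2 + 4 * (p / 8)) * 2 by omega)
    exact h2.eq_neg_one_of_two_right
  rw [← hpow, apply_pow_add_four_mul hχ]
  decide

theorem mem_cycD_iff (hp4 : p % 4 = 1) (hθ : IsPrimitiveRoot (θ : ZMod p) (p - 1))
    (hχ : χ θ = ⟨0, 1⟩) {i : ℕ} (hi : i < 4) (a : ZMod p) :
    a.val ∈ cycD p θ i ↔ χ a = ⟨0, 1⟩ ^ i := by
  simp only [cycD, mem_image, mem_range]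
  constructor
  · rintro ⟨j, -, hj⟩
    rw [← ZMod.natCast_zmod_val a, ← hj, ZMod.natCast_mod, Nat.cast_pow, apply_pow_add_four_mul hχ]
  · intro ha
    have ha0 : a ≠ 0 := by
      rintro rfl
      rw [MulChar.map_zero] at ha
      exact pow_ne_zero i (by decide) ha.symm
    obtain ⟨i', hi', j, hj, rfl⟩ := exists_eq_pow_add_four_mul hp4 hθ ha0
    rw [apply_pow_add_four_mul hχ] at ha
    obtain rfl := isPrimitiveRoot_gaussianInt_I.pow_inj hi' hi ha
    exact ⟨j, hj, by rw [← ZMod.val_natCast, Nat.cast_pow]⟩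

theorem two_mul_graySeq_val (hp4 : p % 4 = 1) (hθ : IsPrimitiveRoot (θ : ZMod p) (p - 1))
    (hχ : χ θ = ⟨0, 1⟩) (a : ZMod p) :
    2 * (graySeq (seqS2 p θ) (seqS4 p θ) a.val : ℤ) =
      (χ a ^ 2).re + 2 * ((χ a).re - (χ a).im) + 3 * (1 - if a = 0 then 1 else 0) := by
  have hmem {i : ℕ} (hi : i < 4) := mem_cycD_iff hp4 hθ hχ hi a
  simp only [graySeq, seqS2, seqS4, mem_union, hmem (show 0 < 4 by norm_num),
    hmem (show 2 < 4 by norm_num), hmem (show 3 < 4 by norm_num)]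
  rcases eq_or_ne a 0 with rfl | ha
  · rw [MulChar.map_zero, if_pos rfl]
    decide
  · rw [if_neg ha]
    rcases gaussianInt_eq_of_isUnit (ha.isUnit.map χ) with h | h | h | h <;> rw [h] <;> decide

end CyclotomicClasses

section GeneratingValue

theorem floor_logb_le_adicComplexity4 {p : ℕ} (hp : p ≠ 0) {u : ℕ → ℕ} {C : ℝ}
    (hC : (Nat.gcd (4 ^ p - 1) (seqVal p u) : ℝ) ≤ C) :
    ⌊Real.logb 4 (((4 ^ p - 1 : ℕ) : ℝ) / C + 1)⌋ ≤ adicComplexity4 p u := by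
  have hN : 0 < 4 ^ p - 1 := Nat.sub_pos_of_lt (Nat.one_lt_pow hp (by norm_num))
  have hgcd : (0 : ℝ) < Nat.gcd (4 ^ p - 1) (seqVal p u) := by
    exact_mod_cast Nat.gcd_pos_of_pos_left _ hN
  have hCpos : 0 < C := hgcd.trans_le hC
  refine Int.floor_le_floor (Real.logb_le_logb_of_le (by norm_num) (by positivity) ?_)
  gcongr

theorem sum_zmod_val_eq_sum_range {n : ℕ} [NeZero n] {M : Type*} [AddCommMonoid M] (f : ℕ → M) :
    ∑ a : ZMod n, f a.val = ∑ t ∈ range n, f t := by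
  refine sum_nbij ZMod.val (fun a _ => mem_range.2 a.val_lt) (ZMod.val_injective n).injOn ?_
    fun _ _ => rfl
  exact fun t ht => ⟨t, mem_univ _, ZMod.val_cast_of_lt (mem_range.1 ht)⟩

variable {p θ : ℕ} [hp : Fact p.Prime] {χ : MulChar (ZMod p) GaussianInt}

theorem two_mul_seqVal (hp4 : p % 4 = 1) (hθ : IsPrimitiveRoot (θ : ZMod p) (p - 1))
    (hχ : χ θ = ⟨0, 1⟩) :
    2 * (seqVal p (graySeq (seqS2 p θ) (seqS4 p θ)) : ℤ) =
      (quadraticPoly χ).eval 4 + 2 * (quarticPoly χ).eval 4 +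
        3 * (∑ t ∈ range p, 4 ^ t - 1) := by
  have hsum : ∑ t ∈ range p, 4 ^ t - 1 =
      ∑ a : ZMod p, (1 - if a = 0 then 1 else 0) * (4 : ℤ) ^ a.val := by
    simp [sub_mul, sum_zmod_val_eq_sum_range fun t => (4 : ℤ) ^ t]
  rw [hsum, quadraticPoly, quarticPoly, eval_periodPoly, eval_periodPoly, seqVal, Nat.cast_sum,
    ← sum_zmod_val_eq_sum_range, mul_sum, mul_sum, mul_sum, ← sum_add_distrib, ← sum_add_distrib]
  refine sum_congr rfl fun a _ => ?_
  push_cast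
  linear_combination 4 ^ a.val * two_mul_graySeq_val hp4 hθ hχ a

theorem dvd_sq_sub_mul_sq {d q b G H : ℤ} (hG : d ∣ G ^ 2 - q) (hH : d ∣ H ^ 2 + (q + b * G))
    (hGH : d ∣ G + 2 * H - 3) : d ∣ (5 * q + 9) ^ 2 - q * (6 - 4 * b) ^ 2 := by
  have hlin : d ∣ (5 * q + 9) - (6 - 4 * b) * G := by
    have heq : (5 * q + 9) - (6 - 4 * b) * G =
        4 * (H ^ 2 + (q + b * G)) - (G ^ 2 - q) + (G - 3 - 2 * H) * (G + 2 * H - 3) := by ring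
    rw [heq]
    exact ((hH.mul_left 4).sub hG).add (hGH.mul_left _)
  have heq : (5 * q + 9) ^ 2 - q * (6 - 4 * b) ^ 2 =
      (5 * q + 9 + (6 - 4 * b) * G) * ((5 * q + 9) - (6 - 4 * b) * G) +
        (6 - 4 * b) ^ 2 * (G ^ 2 - q) := by ring
  rw [heq]
  exact (hlin.mul_left _).add (hG.mul_left _)

theorem le_two_mul_add_one_of_dvd_seqVal {d : ℕ} (hp8 : p % 8 = 5)
    (hθ : IsPrimitiveRoot (θ : ZMod p) (p - 1)) (h3 : ¬ 3 ∣ d) (hd : d ∣ ∑ t ∈ range p, 4 ^ t)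
    (hU : d ∣ seqVal p (graySeq (seqS2 p θ) (seqS4 p θ))) : d ≤ 2 * p + 1 := by
  obtain ⟨χ, hχ⟩ := exists_mulChar_apply_eq_I (by omega) hθ
  have hχ2 := sq_ne_one_of_apply_eq_I hχ
  have hχ1 := apply_neg_one_of_apply_eq_I hp8 hθ hχ
  obtain ⟨x, y, hxy, hy⟩ := exists_card_eq_sq_add_four_mul_sq hχ2
  rw [ZMod.card] at hxy
  have hdZ : (d : ℤ) ∣ ∑ t ∈ range p, 4 ^ t := by exact_mod_cast Int.natCast_dvd_natCast.2 hd
  have hG := hdZ.trans (geom_sum_dvd_quadraticPoly_sq_sub hχ2 4)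
  have hH := hdZ.trans (geom_sum_dvd_quarticPoly_sq_add hχ2 hχ1 4)
  have hGH : (d : ℤ) ∣ (quadraticPoly χ).eval 4 + 2 * (quarticPoly χ).eval 4 - 3 := by
    have heq := two_mul_seqVal (by omega) hθ hχ
    rw [mul_sub, mul_one, ← add_sub_assoc, add_sub_right_comm] at heq
    rw [← dvd_add_left (hdZ.mul_left 3), ← heq]
    exact (Int.natCast_dvd_natCast.2 hU).mul_left 2
  have hM : (d : ℤ) ∣ (5 * p + 9) ^ 2 - 4 * p * (4 * y - 3) ^ 2 := by
    have heq : (5 * p + 9 : ℤ) ^ 2 - p * (6 - 4 * (2 * y)) ^ 2 =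
        (5 * p + 9) ^ 2 - 4 * p * (4 * y - 3) ^ 2 := by ring
    rw [← heq, ← hy]
    exact dvd_sq_sub_mul_sq hG hH hGH
  have hd4 : d ∣ 4 ^ p - 1 := hd.trans ⟨3, by rw [four_pow_sub_one, mul_comm]⟩
  exact le_two_mul_add_one_of_dvd hp.out hp8 hxy hd4 h3 hM

theorem gcd_four_pow_sub_one_seqVal_le (hp8 : p % 8 = 5)
    (hθ : IsPrimitiveRoot (θ : ZMod p) (p - 1)) :
    Nat.gcd (4 ^ p - 1) (seqVal p (graySeq (seqS2 p θ) (seqS4 p θ))) ≤ 3 * (2 * p + 1) := by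
  set U := seqVal p (graySeq (seqS2 p θ) (seqS4 p θ))
  set d := Nat.gcd (∑ t ∈ range p, 4 ^ t) U
  have hp3 : ¬ 3 ∣ p := fun h => by
    have := (Nat.prime_dvd_prime_iff_eq Nat.prime_three hp.out).1 h
    omega
  have hd3 : ¬ 3 ∣ d := fun h =>
    hp3 (three_dvd_geom_sum_four_iff.1 (h.trans (Nat.gcd_dvd_left _ _)))
  have hd : d ≤ 2 * p + 1 :=
    le_two_mul_add_one_of_dvd_seqVal hp8 hθ hd3 (Nat.gcd_dvd_left _ _) (Nat.gcd_dvd_right _ _)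
  have hpos : 0 < d := Nat.pos_of_ne_zero fun h => hd3 (h ▸ dvd_zero 3)
  have hdvd : Nat.gcd (4 ^ p - 1) U ∣ 3 * d := by
    rw [four_pow_sub_one, ← Nat.gcd_mul_left]
    exact Nat.gcd_dvd_gcd_mul_left_right _ _ _
  exact (Nat.le_of_dvd (by omega) hdvd).trans (by omega)

end GeneratingValue

theorem theorem1
    (p : ℕ) (hp : p.Prime) (hp8 : p % 8 = 5)
    (x y : ℤ) (hx : x % 4 = 1) (hxy : (p : ℤ) = x ^ 2 + 4 * y ^ 2)
    (θ : ℕ) (hθ : IsPrimitiveRoot (θ : ZMod p) (p - 1))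
    (hy : 16 * (((cycD p θ 0).filter (fun a => (a + 1) % p ∈ cycD p θ 1)).card : ℤ)
        = (p : ℤ) + 1 + 2 * x - 8 * y)
    :
    ⌊Real.logb 4 (((4 ^ p - 1 : ℕ) : ℝ) / ((3 * (1 + 2 * (p : ℝ)))) + 1)⌋ ≤
      adicComplexity4 p (graySeq (seqS2 p θ) (seqS4 p θ)) := by
  have := Fact.mk hp
  have hgcd := gcd_four_pow_sub_one_seqVal_le hp8 hθ
  refine floor_logb_le_adicComplexity4 hp.ne_zero ?_
  rw [add_comm 1]
  exact_mod_cast hgcd
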